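/- Let U, V be finite-dimensional vector spaces over a field K, and S a linear subspace of L(U,V) with codim S ≤ dim V − 2. Then every range-compatible group homomorphism F : S → V is local, i.e., there exists x ∈ U with F(s) = s(x) for all s ∈ S. -/

import Mathlib

/-! Induct on the codimension of `S`. If `v` spans a line that does not carry all its rank-one
operators in `S`, then passing from `V` to `V ⧸ K ∙ v` lowers the codimension, so by induction `F`
is evaluation at some `x` modulo `K ∙ v`. Such vectors form the complement of a proper subspace, so
we find two independent ones, `v` and `w`, with evaluation points `x` and `y`. If `x = y`, then `F`
is evaluation at `x`, as the lines of `v` and `w` meet trivially. Otherwise all `s ∈ S` map `x - y`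
into the span of `v` and `w`. By the codimension bound that condition defines `S`, whence `S`
contains all operators of range `K ∙ v`, against the choice of `v`. When `S` is everything, `F`
maps each `φ.smulRight v` to a multiple of `v` whose coefficient depends on `φ` alone. -/

open Module Cardinal

theorem exists_notMem_and_notMem {G σ : Type*} [AddGroup G] [SetLike σ G] [AddSubgroupClass σ G]
    {A B : σ} (hA : ∃ a, a ∉ A) (hB : ∃ b, b ∉ B) : ∃ x, x ∉ A ∧ x ∉ B := by
  obtain ⟨a, ha⟩ := hA
  obtain ⟨b, hb⟩ := hB
  by_cases haB : a ∈ B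
  · by_cases hbA : b ∈ A
    · exact ⟨a + b, (add_mem_cancel_right hbA).not.2 ha, (add_mem_cancel_left haB).not.2 hb⟩
    · exact ⟨b, hbA, hb⟩
  · exact ⟨a, ha, haB⟩

theorem mapQ_surjective {R M N : Type*} [Ring R] [AddCommGroup M] [Module R M]
    [AddCommGroup N] [Module R N] {f : M →ₗ[R] N} {S : Submodule R M} {T : Submodule R N}
    (hf : Function.Surjective f) (hST : S ≤ T.comap f) :
    Function.Surjective (S.mapQ T f hST) := by
  rw [← LinearMap.range_eq_top, Submodule.range_mapQ, LinearMap.range_eq_top.2 hf,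
    Submodule.map_top, Submodule.range_mkQ]

section VectorSpace

variable {K V : Type*} [DivisionRing K] [AddCommGroup V] [Module K V]

theorem linearIndependent_pair_of_notMem_span_singleton {v w : V} (hv : v ≠ 0)
    (hw : w ∉ K ∙ v) : LinearIndependent K ![v, w] :=
  (LinearIndependent.pair_iff' hv).2 fun a ha ↦ hw (Submodule.mem_span_singleton.2 ⟨a, ha⟩)

theorem rank_span_singleton_le (v : V) : Module.rank K (K ∙ v) ≤ 1 :=
  (rank_span_le {v}).trans_eq (mk_singleton v)

theorem exists_notMem_span_singleton (hV : 1 < Module.rank K V) (v : V) : ∃ w, w ∉ K ∙ v := by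
  refine SetLike.exists_not_mem_of_ne_top _ (fun h ↦ hV.not_ge ?_) rfl
  rw [← rank_top K V, ← h]
  exact rank_span_singleton_le v

theorem exists_forall_eq_smul_of_forall_exists_eq_smul (hV : 1 < Module.rank K V) (G : V →+ V)
    (hG : ∀ v, ∃ c : K, G v = c • v) : ∃ c : K, ∀ v, G v = c • v := by
  choose c hc using hG
  have ratio_eq_of_independent {v u : V} (h : LinearIndependent K ![v, u]) : c v = c u := by
    have hsum : c v • v + c u • u = c (v + u) • v + c (v + u) • u := by
      rw [← hc, ← hc, ← map_add, hc, smul_add]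
    obtain ⟨hv, hu⟩ := h.eq_of_pair hsum
    exact hv.trans hu.symm
  have ratio_eq {v w : V} (hv : v ≠ 0) (hw : w ≠ 0) : c v = c w := by
    obtain ⟨u, huv, huw⟩ := exists_notMem_and_notMem (exists_notMem_span_singleton hV v)
      (exists_notMem_span_singleton hV w)
    exact (ratio_eq_of_independent (linearIndependent_pair_of_notMem_span_singleton hv huv)).trans
      (ratio_eq_of_independent (linearIndependent_pair_of_notMem_span_singleton hw huw)).symm
  have : Nontrivial V := rank_pos_iff_nontrivial.1 (zero_lt_one.trans hV)
  obtain ⟨v, hv⟩ := exists_ne (0 : V)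
  refine ⟨c v, fun w ↦ ?_⟩
  rcases eq_or_ne w 0 with rfl | hw
  · simp
  · rw [hc, ratio_eq hw hv]

theorem natCast_le_rank_quotient {P : Submodule K V} {n k : ℕ} (hP : Module.rank K P ≤ k)
    (hV : ((n + k : ℕ) : Cardinal) ≤ Module.rank K V) : n ≤ Module.rank K (V ⧸ P) := by
  rw [← Submodule.rank_quotient_add_rank P, Nat.cast_add] at hV
  exact (add_le_add_iff_of_lt_aleph0 natCast_lt_aleph0).1 (hV.trans (by gcongr))

theorem exists_notMem_disjoint_span_singleton (hV : 1 < Module.rank K V) {W : Submodule K V}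
    (hW : W ≠ ⊤) : ∃ v ∉ W, ∃ w ∉ W, Disjoint (K ∙ v) (K ∙ w) := by
  obtain ⟨v, hv⟩ := SetLike.exists_not_mem_of_ne_top W hW rfl
  obtain ⟨w, hw, hvw⟩ := exists_notMem_and_notMem ⟨v, hv⟩ (exists_notMem_span_singleton hV v)
  have hw0 : w ≠ 0 := (ne_of_mem_of_not_mem W.zero_mem hw).symm
  exact ⟨v, hv, w, hw, (Submodule.disjoint_span_singleton' hw0).2 hvw⟩

theorem eq_comap_of_finrank_quotient_le {M N : Type*} [AddCommGroup M] [Module K M]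
    [AddCommGroup N] [Module K N] {f : M →ₗ[K] N} {S : Submodule K M} {T : Submodule K N}
    [FiniteDimensional K (M ⧸ S)]
    (hf : Function.Surjective f) (hST : S ≤ T.comap f)
    (hrank : finrank K (M ⧸ S) ≤ finrank K (N ⧸ T)) : S = T.comap f := by
  have hsurj := mapQ_surjective hf hST
  have : FiniteDimensional K (N ⧸ T) := .of_surjective _ hsurj
  have hinj := (OrzechProperty.bijective_of_surjective_of_finrank_le _ hsurj hrank).injective
  refine hST.antisymm fun m hm ↦ (Submodule.Quotient.mk_eq_zero S).1 (hinj ?_)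
  simpa using hm

end VectorSpace

theorem sum_smulRight_coord_apply {R M N ι : Type*} [CommSemiring R] [AddCommMonoid M] [Module R M]
    [AddCommMonoid N] [Module R N] [Fintype ι] (b : Basis ι R M) (f : M →ₗ[R] N) :
    ∑ i, (b.coord i).smulRight (f (b i)) = f := by
  classical
  exact b.ext fun j ↦ by simp [Finsupp.single_apply]

section RangeCompatible

variable {K U V : Type*} [Field K] [AddCommGroup U] [Module K U] [AddCommGroup V] [Module K V]
  {S : Submodule K (U →ₗ[K] V)} {F : S →+ V}

/-- A group homomorphism `F` on a space of operators is range-compatible if it maps each operator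
into its range. -/
def IsRangeCompatible (F : S →+ V) : Prop :=
  ∀ s : S, F s ∈ LinearMap.range (s : U →ₗ[K] V)

/-- A group homomorphism on a space of operators is local if it is the evaluation at a vector. -/
def IsLocal (F : S →+ V) : Prop :=
  ∃ x : U, ∀ s : S, F s = (s : U →ₗ[K] V) x

variable (S) in
/-- The vectors `v` such that `S` contains all operators whose range lies in `K ∙ v`. -/
def rankOneDirections : Submodule K V :=
  ⨅ φ : Dual K U, S.comap (LinearMap.smulRightₗ φ)

theorem mem_rankOneDirections {v : V} :
    v ∈ rankOneDirections S ↔ ∀ φ : Dual K U, φ.smulRight v ∈ S := by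
  simp [rankOneDirections]

theorem eq_top_of_rankOneDirections_eq_top [FiniteDimensional K U]
    (h : rankOneDirections S = ⊤) : S = ⊤ := by
  refine eq_top_iff.2 fun s _ ↦ ?_
  rw [← sum_smulRight_coord_apply (finBasis K U) s]
  exact S.sum_mem fun i _ ↦ mem_rankOneDirections.1 (h ▸ Submodule.mem_top) _

theorem IsRangeCompatible.isLocal_of_top [FiniteDimensional K U] (hV : 1 < Module.rank K V)
    {F : (⊤ : Submodule K (U →ₗ[K] V)) →+ V} (hF : IsRangeCompatible F) : IsLocal F := by
  let toTop : (U →ₗ[K] V) →+ (⊤ : Submodule K (U →ₗ[K] V)) :=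
    (Submodule.topEquiv (R := K)).symm.toLinearMap.toAddMonoidHom
  have ratio (φ : Dual K U) : ∃ c : K, ∀ v, F (toTop (φ.smulRight v)) = c • v := by
    refine exists_forall_eq_smul_of_forall_exists_eq_smul hV
      ((F.comp toTop).comp (LinearMap.smulRightₗ φ).toAddMonoidHom) fun v ↦ ?_
    obtain ⟨u, hu⟩ := hF (toTop (φ.smulRight v))
    exact ⟨φ u, hu.symm⟩
  let b := finBasis K U
  choose c hc using fun i ↦ ratio (b.coord i)
  refine ⟨∑ i, c i • b i, fun s ↦ ?_⟩
  calc F s = F (toTop (∑ i, (b.coord i).smulRight (s.1 (b i)))) := by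
        rw [sum_smulRight_coord_apply]; rfl
    _ = ∑ i, c i • s.1 (b i) := by simp only [map_sum, hc]
    _ = s.1 (∑ i, c i • b i) := by simp only [map_sum, map_smul]

theorem IsRangeCompatible.exists_map {V' : Type*} [AddCommGroup V'] [Module K V']
    (hF : IsRangeCompatible F) (g : V →ₗ[K] V') :
    ∃ G : S.map (g.compRight K) →+ V', IsRangeCompatible G ∧
      ∀ s : S, G ((g.compRight K).submoduleMap S s) = g (F s) := by
  let r := ((g.compRight K).submoduleMap S).toAddMonoidHom
  have hr : Function.Surjective r := (g.compRight K).submoduleMap_surjective S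
  have hker : r.ker ≤ (g.toAddMonoidHom.comp F).ker := fun s hs ↦ by
    obtain ⟨u, hu⟩ := hF s
    have hgs : g ∘ₗ s.1 = 0 := congrArg Subtype.val (AddMonoidHom.mem_ker.1 hs)
    exact AddMonoidHom.mem_ker.2 ((congrArg g hu.symm).trans (LinearMap.congr_fun hgs u))
  let G := r.liftOfSurjective hr ⟨_, hker⟩
  have hG (s : S) : G (r s) = g (F s) := r.liftOfRightInverse_comp_apply _ _ ⟨_, hker⟩ s
  refine ⟨G, hr.forall.2 fun s ↦ ?_, hG⟩
  obtain ⟨u, hu⟩ := hF s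
  exact ⟨u, (congrArg g hu).trans (hG s).symm⟩

theorem compRight_surjective {V' : Type*} [AddCommGroup V'] [Module K V'] {g : V →ₗ[K] V'}
    (hg : Function.Surjective g) : Function.Surjective (g.compRight K (M := U)) :=
  fun t ↦ Module.projective_lifting_property g t hg

theorem finrank_quotient_map_compRight_mkQ_lt [FiniteDimensional K ((U →ₗ[K] V) ⧸ S)] {v : V}
    (hv : v ∉ rankOneDirections S) :
    finrank K ((U →ₗ[K] V ⧸ K ∙ v) ⧸ S.map ((K ∙ v).mkQ.compRight K)) <
      finrank K ((U →ₗ[K] V) ⧸ S) := by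
  by_contra! hle
  refine hv (mem_rankOneDirections.2 fun φ ↦ ?_)
  rw [eq_comap_of_finrank_quotient_le (compRight_surjective (K ∙ v).mkQ_surjective)
    (Submodule.le_comap_map _ _) hle]
  have hzero : (K ∙ v).mkQ.compRight K (φ.smulRight v) = 0 := by ext u; simp
  exact Submodule.mem_comap.2 (hzero ▸ zero_mem _)

theorem eq_comap_applyₗ_of_forall_apply_mem [FiniteDimensional K ((U →ₗ[K] V) ⧸ S)]
    {P : Submodule K V} {k : ℕ} (hP : Module.rank K P ≤ k)
    (hcodim : ((finrank K ((U →ₗ[K] V) ⧸ S) + k : ℕ) : Cardinal) ≤ Module.rank K V)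
    {x : U} (hx : x ≠ 0) (hS : ∀ s ∈ S, s x ∈ P) : S = P.comap (LinearMap.applyₗ x) := by
  have hsurj : Function.Surjective (LinearMap.applyₗ x : (U →ₗ[K] V) →ₗ[K] V) := fun v ↦ by
    obtain ⟨φ, hφ⟩ := Projective.exists_dual_eq_one K hx
    exact ⟨φ.smulRight v, by simp [hφ]⟩
  have hle : S ≤ P.comap (LinearMap.applyₗ x) := hS
  have : FiniteDimensional K (V ⧸ P) := .of_surjective _ (mapQ_surjective hsurj hle)
  refine eq_comap_of_finrank_quotient_le hsurj hle ?_
  exact_mod_cast (natCast_le_rank_quotient hP hcodim).trans_eq (finrank_eq_rank K (V ⧸ P)).symm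

theorem eq_of_forall_sub_mem_span_singleton [FiniteDimensional K ((U →ₗ[K] V) ⧸ S)]
    (hcodim : ((finrank K ((U →ₗ[K] V) ⧸ S) + 2 : ℕ) : Cardinal) ≤ Module.rank K V)
    {v w : V} (hv : v ∉ rankOneDirections S) {x y : U}
    (hx : ∀ s : S, F s - s.1 x ∈ K ∙ v) (hy : ∀ s : S, F s - s.1 y ∈ K ∙ w) : x = y := by
  by_contra hxy
  let P := Submodule.span K {v, w}
  have hP : Module.rank K P ≤ (2 : ℕ) := by
    classical
    have h := rank_span_finset_le (R := K) ({v, w} : Finset V)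
    rw [Finset.coe_pair] at h
    exact h.trans (mod_cast Finset.card_le_two)
  have hS : ∀ s ∈ S, s (x - y) ∈ P := fun s hs ↦ by
    have h := P.sub_mem (Submodule.span_mono (by simp) (hy ⟨s, hs⟩))
      (Submodule.span_mono (by simp) (hx ⟨s, hs⟩))
    rwa [sub_sub_sub_cancel_left, ← map_sub] at h
  refine hv (mem_rankOneDirections.2 fun φ ↦ ?_)
  rw [eq_comap_applyₗ_of_forall_apply_mem hP hcodim (sub_ne_zero.2 hxy) hS]
  exact P.smul_mem _ (Submodule.subset_span (by simp))

theorem isLocal_of_forall_exists_sub_mem_span_singleton [FiniteDimensional K U]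
    [FiniteDimensional K ((U →ₗ[K] V) ⧸ S)] (hS : S ≠ ⊤)
    (hcodim : ((finrank K ((U →ₗ[K] V) ⧸ S) + 2 : ℕ) : Cardinal) ≤ Module.rank K V)
    (hF : ∀ v ∉ rankOneDirections S, ∃ x : U, ∀ s : S, F s - s.1 x ∈ K ∙ v) : IsLocal F := by
  have hV : 1 < Module.rank K V := lt_of_lt_of_le (by norm_cast; lia) hcodim
  obtain ⟨v, hv, w, hw, hvw⟩ := exists_notMem_disjoint_span_singleton hV
    (mt eq_top_of_rankOneDirections_eq_top hS)
  obtain ⟨x, hx⟩ := hF v hv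
  obtain ⟨y, hy⟩ := hF w hw
  obtain rfl := eq_of_forall_sub_mem_span_singleton hcodim hv hx hy
  exact ⟨x, fun s ↦ sub_eq_zero.1 (Submodule.disjoint_def.1 hvw _ (hx s) (hy s))⟩

end RangeCompatible

theorem stmt_4_general {K U V : Type*} [Field K] [AddCommGroup U] [Module K U]
    [AddCommGroup V] [Module K V] [FiniteDimensional K U]
    (S : Submodule K (U →ₗ[K] V)) [FiniteDimensional K ((U →ₗ[K] V) ⧸ S)]
    (hcodim : ((finrank K ((U →ₗ[K] V) ⧸ S) + 2 : ℕ) : Cardinal) ≤ Module.rank K V)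
    (F : S →+ V) (hF : IsRangeCompatible F) : IsLocal F := by
  induction hn : finrank K ((U →ₗ[K] V) ⧸ S) using Nat.strong_induction_on generalizing V with
  | _ n ih =>
  subst hn
  rcases eq_or_ne S ⊤ with rfl | hS
  · exact hF.isLocal_of_top (lt_of_lt_of_le (by norm_cast; lia) hcodim)
  refine isLocal_of_forall_exists_sub_mem_span_singleton hS hcodim fun v hv ↦ ?_
  let L := K ∙ v
  obtain ⟨G, hG, hGF⟩ := hF.exists_map L.mkQ
  have hlt := finrank_quotient_map_compRight_mkQ_lt hv
  have hfin : FiniteDimensional K ((U →ₗ[K] V ⧸ L) ⧸ S.map (L.mkQ.compRight K)) :=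
    .of_surjective _ (mapQ_surjective (compRight_surjective L.mkQ_surjective)
      (Submodule.le_comap_map _ _))
  have hcodimL : ((finrank K ((U →ₗ[K] V ⧸ L) ⧸ S.map (L.mkQ.compRight K)) + 2 : ℕ) : Cardinal) ≤
      Module.rank K (V ⧸ L) :=
    natCast_le_rank_quotient (k := 1) (by simpa using rank_span_singleton_le v)
      ((Nat.cast_le.2 (Nat.add_le_add_right (Nat.succ_le_of_lt hlt) 2)).trans hcodim)
  obtain ⟨x, hx⟩ := ih _ hlt _ hcodimL G hG rfl
  exact ⟨x, fun s ↦ (Submodule.Quotient.eq L).1 ((hGF s).symm.trans (hx _))⟩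

theorem stmt_4 {K U V : Type*} [Field K] [AddCommGroup U] [Module K U]
    [AddCommGroup V] [Module K V] [FiniteDimensional K U] [FiniteDimensional K V]
    (S : Submodule K (U →ₗ[K] V))
    (hcodim : Module.finrank K ((U →ₗ[K] V) ⧸ S) + 2 ≤ Module.finrank K V)
    (F : S →+ V)
    (hrc : ∀ s : S, F s ∈ LinearMap.range (s : U →ₗ[K] V)) :
    ∃ x : U, ∀ s : S, F s = (s : U →ₗ[K] V) x :=
  stmt_4_general S (by rw [← finrank_eq_rank]; exact_mod_cast hcodim) F hrc
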